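/- Let K be a positive integer. For each k ∈ {1,…,K}, let π_k ≥ 0 with Σ_{k=1}^K π_k = 1 and π_k > 0 for some k, let c_k ∈ ℝ^L, let Γ_k ∈ ℝ^{L×L} be symmetric positive definite, let a_{dk} ∈ ℝ^L and b_{dk} ∈ ℝ for 1 ≤ d ≤ D. Define g_k : ℝ^L → ℝ by g_k(x) = N(x; c_k, Γ_k) · Π_{d=1}^{D} Π_{t=1}^{T} N¹(y'_{dt}; a_{dk}ᵀ x + b_{dk}, σ_d²)^{χ_{dt}}, define P_k = Γ_k⁻¹ + Σ_{d,t} (χ_{dt}/σ_d²) a_{dk} a_{dk}ᵀ, V_k = P_k⁻¹, μ_k = V_k (Γ_k⁻¹ c_k + Σ_{d,t} (χ_{dt}/σ_d²) a_{dk} (y'_{dt} − b_{dk})), and unnormalized weights w_k = π_k · ((det V_k)^{1/2} / (det Γ_k)^{1/2}) · exp(−(1/2) (Σ_{d,t} (χ_{dt}/σ_d²) (y'_{dt} − b_{dk})² + c_kᵀ Γ_k⁻¹ c_k − μ_kᵀ V_k⁻¹ μ_k)), with ν_k = w_k / Σ_{j=1}^K w_j. Then Σ_{j=1}^K w_j >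 0, the function Σ_{k=1}^K π_k g_k is Lebesgue integrable on ℝ^L with positive integral, and for every x ∈ ℝ^L, (Σ_{k=1}^K π_k g_k(x)) / ∫_{ℝ^L} Σ_{k=1}^K π_k g_k(x') dx' = Σ_{k=1}^K ν_k N(x; μ_k, V_k). -/

import Mathlib

open Matrix MeasureTheory Real BigOperators

/-- Multivariate Gaussian density `N(x; m, S)` on `ℝ^L`. -/
noncomputable def gaussN {L : ℕ} (m : Fin L → ℝ) (S : Matrix (Fin L) (Fin L) ℝ)
    (x : Fin L → ℝ) : ℝ :=
  (2 * Real.pi) ^ (-(L : ℝ) / 2) * S.det ^ (-(1 : ℝ) / 2) *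
    Real.exp (-(1/2) * ((x - m) ⬝ᵥ S⁻¹.mulVec (x - m)))

/-- Scalar Gaussian density `N¹(y; m, s²)`. -/
noncomputable def gaussN1 (y m s2 : ℝ) : ℝ :=
  (2 * Real.pi * s2) ^ (-(1 : ℝ) / 2) * Real.exp (-(y - m) ^ 2 / (2 * s2))

theorem gaussN_eq_of_inv_eq {L : ℕ} {S M : Matrix (Fin L) (Fin L) ℝ} (hM : S⁻¹ = Mᵀ * M)
    (m x : Fin L → ℝ) :
    gaussN m S x = (2 * Real.pi) ^ (-(L : ℝ) / 2) * S.det ^ (-(1 : ℝ) / 2) *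
      ∏ i, Real.exp (-(1 / 2) * (M.mulVec (x - m) i) ^ 2) := by
  rw [gaussN, hM, ← Real.exp_sum, ← Finset.mul_sum, ← Matrix.mulVec_mulVec,
    Matrix.dotProduct_mulVec, Matrix.vecMul_transpose]
  simp [dotProduct, sq]

theorem exists_inv_eq_transpose_mul_self {L : ℕ} {S : Matrix (Fin L) (Fin L) ℝ} (hS : S.PosDef) :
    ∃ M : Matrix (Fin L) (Fin L) ℝ, S⁻¹ = Mᵀ * M ∧ |M.det|⁻¹ = S.det ^ ((1 : ℝ) / 2) := by
  open scoped MatrixOrder in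
  obtain ⟨M, hM⟩ := CStarAlgebra.nonneg_iff_eq_star_mul_self.mp hS.inv.posSemidef.nonneg
  have hM' : S⁻¹ = Mᵀ * M := by simpa [Matrix.star_eq_conjTranspose] using hM
  refine ⟨M, hM', ?_⟩
  have hdet := congrArg Matrix.det hM'
  rw [Matrix.det_mul, Matrix.det_transpose, Matrix.det_nonsing_inv, Ring.inverse_eq_inv',
    ← sq, ← sq_abs] at hdet
  rw [← Real.sqrt_eq_rpow, ← inv_inv S.det, hdet, Real.sqrt_inv, Real.sqrt_sq (abs_nonneg _)]

theorem gaussN_integrable_and_integral_eq_one {L : ℕ} (m : Fin L → ℝ)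
    {S : Matrix (Fin L) (Fin L) ℝ} (hS : S.PosDef) :
    Integrable (gaussN m S) ∧ ∫ x, gaussN m S x = 1 := by
  obtain ⟨M, hM, hdet⟩ := exists_inv_eq_transpose_mul_self hS
  have hS0 : 0 < S.det := hS.det_pos
  have hM0 : M.det ≠ 0 := by
    intro h
    rw [h, abs_zero, _root_.inv_zero] at hdet
    exact (Real.rpow_pos_of_pos hS0 _).ne hdet
  set C := (2 * Real.pi) ^ (-(L : ℝ) / 2) * S.det ^ (-(1 : ℝ) / 2) with hC
  let F : (Fin L → ℝ) → ℝ := fun z => ∏ i, Real.exp (-(1 / 2) * z i ^ 2)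
  have hF : Integrable F :=
    Integrable.fintype_prod (f := fun _ t => Real.exp (-(1 / 2) * t ^ 2))
      fun _ => integrable_exp_neg_mul_sq (by norm_num)
  have hFint : ∫ z, F z = (2 * Real.pi) ^ ((L : ℝ) / 2) := by
    rw [integral_fintype_prod_volume_eq_pow (fun t => Real.exp (-(1 / 2) * t ^ 2)),
      integral_gaussian, Fintype.card_fin, Real.sqrt_eq_rpow, ← Real.rpow_natCast,
      ← Real.rpow_mul (by positivity)]
    congr 1 <;> ring
  have hmap := Real.map_matrix_volume_pi_eq_smul_volume_pi hM0
  have hmeas : Measurable (Matrix.toLin' M) :=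
    (LinearMap.continuous_on_pi _).measurable
  have hFm : AEStronglyMeasurable F (Measure.map (Matrix.toLin' M) volume) := by
    rw [hmap]
    exact (hF.smul_measure ENNReal.ofReal_ne_top).aestronglyMeasurable
  have hFM : Integrable (fun y => F (Matrix.toLin' M y)) := by
    refine (integrable_map_measure hFm hmeas.aemeasurable).mp ?_
    rw [hmap]
    exact hF.smul_measure ENNReal.ofReal_ne_top
  have hFMint : ∫ y, F (Matrix.toLin' M y) =
      S.det ^ ((1 : ℝ) / 2) * (2 * Real.pi) ^ ((L : ℝ) / 2) := by
    rw [← integral_map hmeas.aemeasurable hFm, hmap, integral_smul_measure, hFint,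
      ENNReal.toReal_ofReal (abs_nonneg _), abs_inv, hdet, smul_eq_mul]
  have hEq : gaussN m S = fun x => C * F (Matrix.toLin' M (x - m)) := by
    funext x
    rw [gaussN_eq_of_inv_eq hM]
    simp [F, hC]
  rw [hEq]
  refine ⟨(hFM.comp_sub_right m).const_mul C, ?_⟩
  rw [integral_const_mul, integral_sub_right_eq_self (fun y => F (Matrix.toLin' M y)), hFMint, hC]
  calc _ = ((2 * Real.pi) ^ (-(L : ℝ) / 2) * (2 * Real.pi) ^ ((L : ℝ) / 2)) *
        (S.det ^ (-(1 : ℝ) / 2) * S.det ^ ((1 : ℝ) / 2)) := by ring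
    _ = 1 := by
      rw [← Real.rpow_add (by positivity), ← Real.rpow_add hS0]
      simp [neg_div]

theorem dotProduct_mulVec_sub_self {L : ℕ} {M : Matrix (Fin L) (Fin L) ℝ} (hM : M.IsHermitian)
    (x c : Fin L → ℝ) :
    (x - c) ⬝ᵥ M.mulVec (x - c) =
      x ⬝ᵥ M.mulVec x - 2 * (x ⬝ᵥ M.mulVec c) + c ⬝ᵥ M.mulVec c := by
  have hsymm : c ⬝ᵥ M.mulVec x = x ⬝ᵥ M.mulVec c := by
    have hT : Mᵀ = M := by simpa using hM.eq
    rw [Matrix.dotProduct_mulVec, ← Matrix.mulVec_transpose, hT, dotProduct_comm]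
  simp only [Matrix.mulVec_sub, sub_dotProduct, dotProduct_sub, hsymm]
  ring

theorem complete_square {L : ℕ} {ι : Type*} [Fintype ι] {G P : Matrix (Fin L) (Fin L) ℝ}
    (hG : G.IsHermitian) (hPh : P.IsHermitian) (q r : ι → ℝ) (a : ι → Fin L → ℝ)
    (c m x : Fin L → ℝ) (hP : P = G + ∑ i, q i • Matrix.vecMulVec (a i) (a i))
    (hm : P.mulVec m = G.mulVec c + ∑ i, (q i * r i) • a i) :
    (x - c) ⬝ᵥ G.mulVec (x - c) + ∑ i, q i * (r i - a i ⬝ᵥ x) ^ 2 =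
      (x - m) ⬝ᵥ P.mulVec (x - m) +
        (∑ i, q i * r i ^ 2 + c ⬝ᵥ G.mulVec c - m ⬝ᵥ P.mulVec m) := by
  have hxP : x ⬝ᵥ P.mulVec x = x ⬝ᵥ G.mulVec x + ∑ i, q i * (a i ⬝ᵥ x) ^ 2 := by
    rw [hP, Matrix.add_mulVec, dotProduct_add, Matrix.sum_mulVec, dotProduct_sum]
    congr 1
    refine Finset.sum_congr rfl fun i _ => ?_
    rw [Matrix.smul_mulVec, Matrix.vecMulVec_mulVec, dotProduct_smul]
    simp [dotProduct_comm x (a i), sq]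
  have hxm : x ⬝ᵥ P.mulVec m = x ⬝ᵥ G.mulVec c + ∑ i, q i * r i * (a i ⬝ᵥ x) := by
    rw [hm, dotProduct_add, dotProduct_sum]
    simp [dotProduct_comm x]
  have hsum : ∑ i, q i * (r i - a i ⬝ᵥ x) ^ 2 =
      ∑ i, q i * r i ^ 2 - 2 * ∑ i, q i * r i * (a i ⬝ᵥ x) + ∑ i, q i * (a i ⬝ᵥ x) ^ 2 := by
    rw [Finset.mul_sum, ← Finset.sum_sub_distrib, ← Finset.sum_add_distrib]
    exact Finset.sum_congr rfl fun i _ => by ring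
  rw [dotProduct_mulVec_sub_self hG, dotProduct_mulVec_sub_self hPh, hxP, hxm, hsum]
  ring

theorem gaussN1_rpow {s : ℝ} (hs : 0 < s) (y m p : ℝ) :
    gaussN1 y m s ^ p = ((2 * Real.pi * s) ^ (-(1 : ℝ) / 2)) ^ p *
      Real.exp (-(1 / 2) * (p / s * (y - m) ^ 2)) := by
  rw [gaussN1, Real.mul_rpow (by positivity) (Real.exp_nonneg _), ← Real.exp_mul]
  congr 2
  field_simp

/-- Conditioning a Gaussian on weighted affine observations with Gaussian noise. -/
theorem gaussN_mul_prod_gaussN1_rpow {L : ℕ} {ι : Type*} [Fintype ι]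
    {Γ P : Matrix (Fin L) (Fin L) ℝ} (hΓ : Γ.PosDef) (χ s y b : ι → ℝ) (hχ : ∀ i, 0 ≤ χ i)
    (hs : ∀ i, 0 < s i) (a : ι → Fin L → ℝ) (c m : Fin L → ℝ)
    (hP : P = Γ⁻¹ + ∑ i, (χ i / s i) • Matrix.vecMulVec (a i) (a i))
    (hm : m = P⁻¹.mulVec (Γ⁻¹.mulVec c + ∑ i, (χ i / s i * (y i - b i)) • a i)) :
    P.PosDef ∧ ∀ x,
      gaussN c Γ x * ∏ i, gaussN1 (y i) (a i ⬝ᵥ x + b i) (s i) ^ χ i =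
        (∏ i, ((2 * Real.pi * s i) ^ (-(1 : ℝ) / 2)) ^ χ i) *
          (P⁻¹.det ^ ((1 : ℝ) / 2) / Γ.det ^ ((1 : ℝ) / 2) * Real.exp (-(1 / 2) *
            (∑ i, χ i / s i * (y i - b i) ^ 2 + c ⬝ᵥ Γ⁻¹.mulVec c - m ⬝ᵥ P.mulVec m))) *
          gaussN m P⁻¹ x := by
  have hPd : P.PosDef := by
    rw [hP]
    refine hΓ.inv.add_posSemidef (Matrix.posSemidef_sum _ fun i _ => ?_)
    have h := Matrix.posSemidef_vecMulVec_self_star (a i)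
    rw [star_trivial] at h
    exact h.smul (div_nonneg (hχ i) (hs i).le)
  have hPu : IsUnit P.det := hPd.det_pos.ne'.isUnit
  refine ⟨hPd, fun x => ?_⟩
  have hPm : P.mulVec m = Γ⁻¹.mulVec c + ∑ i, (χ i / s i * (y i - b i)) • a i := by
    rw [hm, Matrix.mulVec_mulVec, Matrix.mul_nonsing_inv _ hPu, Matrix.one_mulVec]
  have hsq := complete_square hΓ.inv.isHermitian hPd.isHermitian (fun i => χ i / s i)
    (fun i => y i - b i) a c m x hP hPm
  have hlik : ∏ i, gaussN1 (y i) (a i ⬝ᵥ x + b i) (s i) ^ χ i =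
      (∏ i, ((2 * Real.pi * s i) ^ (-(1 : ℝ) / 2)) ^ χ i) *
        Real.exp (-(1 / 2) * ∑ i, χ i / s i * (y i - b i - a i ⬝ᵥ x) ^ 2) := by
    rw [Finset.mul_sum, Real.exp_sum, ← Finset.prod_mul_distrib]
    refine Finset.prod_congr rfl fun i _ => ?_
    rw [gaussN1_rpow (hs i), sub_sub, add_comm (b i)]
  have hexp := congrArg (fun t => Real.exp (-(1 / 2) * t)) hsq
  simp only [mul_add (-(1 / 2) : ℝ) (_ ⬝ᵥ _), Real.exp_add] at hexp
  have hV0 : 0 < P⁻¹.det := hPd.inv.det_pos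
  have hV : P⁻¹.det ^ ((1 : ℝ) / 2) * P⁻¹.det ^ (-(1 : ℝ) / 2) = 1 := by
    rw [← Real.rpow_add hV0]
    simp [neg_div]
  have hΓ' : Γ.det ^ (-(1 : ℝ) / 2) = (Γ.det ^ ((1 : ℝ) / 2))⁻¹ := by
    rw [← Real.rpow_neg hΓ.det_pos.le, neg_div]
  rw [hlik, gaussN, gaussN, Matrix.nonsing_inv_nonsing_inv _ hPu, hΓ']
  linear_combination
    (2 * Real.pi) ^ (-(L : ℝ) / 2) * (Γ.det ^ ((1 : ℝ) / 2))⁻¹ *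
      (∏ i, ((2 * Real.pi * s i) ^ (-(1 : ℝ) / 2)) ^ χ i) * hexp -
    (2 * Real.pi) ^ (-(L : ℝ) / 2) * (Γ.det ^ ((1 : ℝ) / 2))⁻¹ *
      (∏ i, ((2 * Real.pi * s i) ^ (-(1 : ℝ) / 2)) ^ χ i) *
      Real.exp (-(1 / 2) * ((x - m) ⬝ᵥ P.mulVec (x - m))) *
      Real.exp (-(1 / 2) *
        (∑ i, χ i / s i * (y i - b i) ^ 2 + c ⬝ᵥ Γ⁻¹.mulVec c - m ⬝ᵥ P.mulVec m)) * hV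

/-- Theorem 1 of the paper in density form: the posterior distribution of the
multiple-direction vector `x` given the binaural spectrogram is the Gaussian
mixture `∑ k, ν_k N(x; μ_k, V_k)` whose parameters are given in closed form by
equations (12)–(15). -/
theorem posterior_gmm
    (L D T K : ℕ) (hL : 0 < L) (hD : 0 < D) (hT : 0 < T) (hK : 0 < K)
    (y' : Fin D → Fin T → ℝ)
    (χ : Fin D → Fin T → ℝ) (hχ : ∀ d t, χ d t = 0 ∨ χ d t = 1)
    (σ : Fin D → ℝ) (hσ : ∀ d, 0 < σ d)
    (π' : Fin K → ℝ) (hπ0 : ∀ k, 0 ≤ π' k) (hπ1 : ∑ k, π' k = 1)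
    (hπpos : ∃ k, 0 < π' k)
    (c : Fin K → Fin L → ℝ)
    (Γ : Fin K → Matrix (Fin L) (Fin L) ℝ) (hΓ : ∀ k, (Γ k).PosDef)
    (a : Fin D → Fin K → Fin L → ℝ) (b : Fin D → Fin K → ℝ)
    (g : Fin K → (Fin L → ℝ) → ℝ)
    (hg : ∀ k, g k = fun x => gaussN (c k) (Γ k) x *
      ∏ d, ∏ t, (gaussN1 (y' d t) (a d k ⬝ᵥ x + b d k) (σ d ^ 2)) ^ (χ d t))
    (P V : Fin K → Matrix (Fin L) (Fin L) ℝ) (μ : Fin K → Fin L → ℝ)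
    (hP : ∀ k, P k = (Γ k)⁻¹ +
      ∑ d, ∑ t, (χ d t / σ d ^ 2) • Matrix.vecMulVec (a d k) (a d k))
    (hV : ∀ k, V k = (P k)⁻¹)
    (hμ : ∀ k, μ k = (V k).mulVec ((Γ k)⁻¹.mulVec (c k) +
      ∑ d, ∑ t, ((χ d t / σ d ^ 2) * (y' d t - b d k)) • a d k))
    (w ν : Fin K → ℝ)
    (hw : ∀ k, w k = π' k * ((V k).det ^ ((1 : ℝ) / 2) / (Γ k).det ^ ((1 : ℝ) / 2)) *
      Real.exp (-(1/2) *
        ((∑ d, ∑ t, (χ d t / σ d ^ 2) * (y' d t - b d k) ^ 2)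
          + c k ⬝ᵥ (Γ k)⁻¹.mulVec (c k) - μ k ⬝ᵥ (V k)⁻¹.mulVec (μ k))))
    (hν : ∀ k, ν k = w k / ∑ j, w j) :
    (0 < ∑ j, w j) ∧
      Integrable (fun x : Fin L → ℝ => ∑ k, π' k * g k x) ∧
      (0 < ∫ x : Fin L → ℝ, ∑ k, π' k * g k x) ∧
      ∀ x, (∑ k, π' k * g k x) / (∫ x' : Fin L → ℝ, ∑ k, π' k * g k x')
        = ∑ k, ν k * gaussN (μ k) (V k) x := by
  have hcomp : ∀ k, (P k).PosDef ∧ ∀ x, _ := fun k =>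
    gaussN_mul_prod_gaussN1_rpow (ι := Fin D × Fin T) (hΓ k) (fun i => χ i.1 i.2)
      (fun i => σ i.1 ^ 2) (fun i => y' i.1 i.2) (fun i => b i.1 k)
      (fun i => by rcases hχ i.1 i.2 with h | h <;> simp [h])
      (fun i => pow_pos (hσ i.1) 2) (fun i => a i.1 k) (c k) (μ k)
      (by rw [hP k, Fintype.sum_prod_type])
      (by rw [hμ k, hV k, Fintype.sum_prod_type])
  have hVd : ∀ k, (V k).PosDef := fun k => hV k ▸ (hcomp k).1.inv
  have hVinv : ∀ k, (V k)⁻¹ = P k := fun k => by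
    rw [hV k, Matrix.nonsing_inv_nonsing_inv _ (hcomp k).1.det_pos.ne'.isUnit]
  obtain ⟨C, hC, hmix⟩ : ∃ C : ℝ, 0 < C ∧ ∀ x,
      ∑ k, π' k * g k x = C * ∑ k, w k * gaussN (μ k) (V k) x := by
    refine ⟨∏ i : Fin D × Fin T, ((2 * Real.pi * σ i.1 ^ 2) ^ (-(1 : ℝ) / 2)) ^ χ i.1 i.2,
      Finset.prod_pos fun i _ => ?_, fun x => ?_⟩
    · have := hσ i.1
      positivity
    · rw [Finset.mul_sum]
      refine Finset.sum_congr rfl fun k _ => ?_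
      have h := (hcomp k).2 x
      rw [Fintype.prod_prod_type, Fintype.sum_prod_type, ← hV k] at h
      simp only [hg k, hw k, hVinv k]
      rw [h]
      ring
  have hw0 : ∀ k, 0 ≤ w k := fun k => by
    have := (hVd k).det_pos
    have := (hΓ k).det_pos
    have := hπ0 k
    rw [hw k]
    positivity
  have hwsum : 0 < ∑ j, w j := by
    obtain ⟨k, hk⟩ := hπpos
    refine Finset.sum_pos' (fun j _ => hw0 j) ⟨k, Finset.mem_univ k, ?_⟩
    have := (hVd k).det_pos
    have := (hΓ k).det_pos
    rw [hw k]
    positivity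
  have hint : ∀ k, Integrable (fun x => w k * gaussN (μ k) (V k) x) := fun k =>
    (gaussN_integrable_and_integral_eq_one (μ k) (hVd k)).1.const_mul _
  have htotal : ∫ x, ∑ k, π' k * g k x = C * ∑ j, w j := by
    simp_rw [hmix]
    rw [integral_const_mul, integral_finsetSum _ fun k _ => hint k]
    simp_rw [integral_const_mul, (gaussN_integrable_and_integral_eq_one _ (hVd _)).2, mul_one]
  refine ⟨hwsum, ?_, ?_, fun x => ?_⟩
  · simp_rw [hmix]
    exact (integrable_finsetSum _ fun k _ => hint k).const_mul C
  · rw [htotal]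
    positivity
  · rw [htotal, hmix, mul_div_mul_left _ _ hC.ne', Finset.sum_div]
    exact Finset.sum_congr rfl fun k _ => by rw [hν k]; ring
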